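/- arXiv:1608.02028 — 4 statements merged into one kernel-verified Lean document; each statement's English description precedes it below -/
import Mathlib

section
/- The extended Heston diffusion coefficient satisfies the commutativity (Lie bracket) condition: for every i ≠ j in {1,…,n} and every (y,s) ∈ ℝⁿ × ℝ, (Dσᵢ(y,s))σⱼ(y,s) = (0,…,0, s ρ² yᵢ yⱼ)ᵀ ∈ ℝ^{n+1}; in particular (Dσᵢ)σⱼ = (Dσⱼ)σᵢ for all i, j. -/
/-- The extended Heston diffusion coefficient satisfies the commutativity
(Lie bracket) condition.  The state is `x = (y₁,…,yₙ,s) ∈ ℝ^{n+1}` with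
`yⱼ = x j.castSucc` and `s = x (Fin.last n)`, and
`σⱼ(y,s) = (κ/2)·eⱼ + ρ·s·yⱼ·e_{n+1}`. -/
theorem extended_heston_bracket (n : ℕ) (hn : 1 ≤ n) (κ ρ : ℝ) (hκ : 0 < κ)
    (σ : Fin n → (Fin (n + 1) → ℝ) → (Fin (n + 1) → ℝ))
    (hσ : ∀ j, σ j = fun x =>
      Fin.snoc (fun i => if i = j then κ / 2 else 0)
        (ρ * x (Fin.last n) * x j.castSucc)) :
    (∀ i j : Fin n, i ≠ j → ∀ x : Fin (n + 1) → ℝ,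
      fderiv ℝ (σ i) x (σ j x) =
        Fin.snoc (fun _ => (0 : ℝ))
          (x (Fin.last n) * ρ ^ 2 * x i.castSucc * x j.castSucc)) ∧
    (∀ i j : Fin n, ∀ x : Fin (n + 1) → ℝ,
      fderiv ℝ (σ i) x (σ j x) = fderiv ℝ (σ j) x (σ i x)) := by
  have key : ∀ (i : Fin n) (x v : Fin (n + 1) → ℝ),
      fderiv ℝ (σ i) x v = Fin.snoc (α := fun _ => ℝ) (fun _ => (0 : ℝ))
        (ρ * (v (Fin.last n) * x i.castSucc + x (Fin.last n) * v i.castSucc)) := by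
    intro i x v
    have hc : ∀ k : Fin (n + 1), HasFDerivAt (fun x : Fin (n + 1) → ℝ => x k)
        (ContinuousLinearMap.proj (R := ℝ) (φ := fun _ : Fin (n + 1) => ℝ) k) x :=
      fun k => hasFDerivAt_apply k x
    have hl : HasFDerivAt (fun x : Fin (n + 1) → ℝ => ρ * x (Fin.last n) * x i.castSucc) _ x :=
      ((hc (Fin.last n)).const_mul ρ).mul (hc i.castSucc)
    have hd : DifferentiableAt ℝ (σ i) x := by
      rw [differentiableAt_pi]
      intro k
      rw [hσ i]
      refine Fin.lastCases ?_ (fun k => ?_) k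
      · simpa only [Fin.snoc_last] using hl.differentiableAt
      · simp only [Fin.snoc_castSucc]
        exact differentiableAt_const _
    funext k
    have e : fderiv ℝ (σ i) x v k = fderiv ℝ (fun y => σ i y k) x v := by
      rw [fderiv_apply hd k]
      rfl
    rw [e, hσ i]
    refine Fin.lastCases ?_ (fun k => ?_) k
    · simp only [Fin.snoc_last]
      rw [hl.fderiv]
      simp
      ring
    · simp only [Fin.snoc_castSucc]
      simp
  have hlast : ∀ (j : Fin n) x, σ j x (Fin.last n) = ρ * x (Fin.last n) * x j.castSucc := by
    intro j x
    rw [hσ j]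
    simp only [Fin.snoc_last]
  have hcs : ∀ (i j : Fin n) x, σ j x i.castSucc = if i = j then κ / 2 else 0 := by
    intro i j x
    rw [hσ j]
    simp only [Fin.snoc_castSucc]
  have main : ∀ i j : Fin n, i ≠ j → ∀ x : Fin (n + 1) → ℝ,
      fderiv ℝ (σ i) x (σ j x) =
        Fin.snoc (α := fun _ => ℝ) (fun _ => (0 : ℝ))
          (x (Fin.last n) * ρ ^ 2 * x i.castSucc * x j.castSucc) := by
    intro i j hij x
    rw [key, hlast, hcs, if_neg hij]
    congr 1
    ring
  refine ⟨main, fun i j x => ?_⟩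
  by_cases hij : i = j
  · rw [hij]
  · rw [main i j hij, main j i (Ne.symm hij)]
    congr 1
    ring
end

section
/- Pushing the second diffusion column through the first diffeomorphism gives α₂: for every x = (x₁,x₂,x₃) with x₃ > 0, (DΛ₁(Λ₁⁻¹(x)))·σ₂(Λ₁⁻¹(x)) = (0, κ/2, ρ·x₂·x₃)ᵀ, where Λ₁(y₁,y₂,y₃) = ((2/κ)y₁, y₂, y₃·exp(-(ρ/κ)y₁²)), Λ₁⁻¹(x₁,x₂,x₃) = ((κ/2)x₁, x₂, x₃·exp((ρκ/4)x₁²)), and σ₂(y₁,y₂,y₃) = (0, κ/2, ρ·y₂·y₃)ᵀ. -/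
/-- Pushing the second diffusion column through the first diffeomorphism gives
`α₂`: `(DΛ₁(Λ₁⁻¹(x)))·σ₂(Λ₁⁻¹(x)) = (0, κ/2, ρ·x₂·x₃)ᵀ` for `x₃ > 0`. -/
theorem lambda_one_pushforward_sigma_two (κ ρ : ℝ) (hκ : 0 < κ)
    (Λ₁ Λ₁inv σ₂ : ℝ × ℝ × ℝ → ℝ × ℝ × ℝ)
    (hΛ₁ : Λ₁ = fun y => ((2 / κ) * y.1, y.2.1, y.2.2 * Real.exp (-(ρ / κ) * y.1 ^ 2)))
    (hΛ₁inv : Λ₁inv = fun x => ((κ / 2) * x.1, x.2.1, x.2.2 * Real.exp ((ρ * κ / 4) * x.1 ^ 2)))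
    (hσ₂ : σ₂ = fun y => (0, κ / 2, ρ * y.2.1 * y.2.2)) :
    ∀ x : ℝ × ℝ × ℝ, 0 < x.2.2 →
      fderiv ℝ Λ₁ (Λ₁inv x) (σ₂ (Λ₁inv x)) = (0, κ / 2, ρ * x.2.1 * x.2.2) := by
  intro x _
  have h1 : ∀ p : ℝ × ℝ × ℝ, HasFDerivAt (fun y : ℝ × ℝ × ℝ => y.1)
      (ContinuousLinearMap.fst ℝ ℝ (ℝ × ℝ)) p := fun p => hasFDerivAt_fst
  have h2 : ∀ p : ℝ × ℝ × ℝ, HasFDerivAt (fun y : ℝ × ℝ × ℝ => y.2.1)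
      ((ContinuousLinearMap.fst ℝ ℝ ℝ).comp (ContinuousLinearMap.snd ℝ ℝ (ℝ × ℝ))) p :=
    fun p => hasFDerivAt_snd.fst
  have h3 : ∀ p : ℝ × ℝ × ℝ, HasFDerivAt (fun y : ℝ × ℝ × ℝ => y.2.2)
      ((ContinuousLinearMap.snd ℝ ℝ ℝ).comp (ContinuousLinearMap.snd ℝ ℝ (ℝ × ℝ))) p :=
    fun p => hasFDerivAt_snd.snd
  have hD := fun p : ℝ × ℝ × ℝ => ((h1 p).const_mul (2 / κ)).prodMk ((h2 p).prodMk
    ((h3 p).mul ((((h1 p).pow 2).const_mul (-(ρ / κ))).exp)))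
  have hF := (hD (Λ₁inv x)).fderiv
  change fderiv ℝ (fun y : ℝ × ℝ × ℝ =>
    ((2 / κ) * y.1, y.2.1, y.2.2 * Real.exp (-(ρ / κ) * y.1 ^ 2))) (Λ₁inv x) = _ at hF
  rw [← hΛ₁] at hF
  have he : Real.exp (-(ρ / κ) * (κ / 2 * x.1) ^ 2) * Real.exp ((ρ * κ / 4) * x.1 ^ 2) = 1 := by
    rw [← Real.exp_add, Real.exp_eq_one_iff]
    field_simp
    ring
  rw [hF, hσ₂, hΛ₁inv]
  ext
  · simp
  · simp
  · simp only [ContinuousLinearMap.prod_apply, ContinuousLinearMap.add_apply,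
      ContinuousLinearMap.smul_apply, ContinuousLinearMap.comp_apply,
      ContinuousLinearMap.coe_fst', ContinuousLinearMap.coe_snd', smul_eq_mul, mul_zero,
      zero_add, smul_zero]
    linear_combination (ρ * x.2.1 * x.2.2) * he
end

section
/- The second diffeomorphism rectifies α₂: for every x = (x₁,x₂,x₃) with x₃ > 0, (DΛ₂(Λ₂⁻¹(x)))·α₂(Λ₂⁻¹(x)) = (0,1,0)ᵀ, where Λ₂(y₁,y₂,y₃) = (y₁, (2/κ)y₂, y₃·exp(-(ρ/κ)y₂²)), Λ₂⁻¹(x₁,x₂,x₃) = (x₁, (κ/2)x₂, x₃·exp((ρκ/4)x₂²)), and α₂(x₁,x₂,x₃) = (0, κ/2, ρ·x₂·x₃)ᵀ. -/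
/-- The second diffeomorphism rectifies `α₂`:
`(DΛ₂(Λ₂⁻¹(x)))·α₂(Λ₂⁻¹(x)) = (0,1,0)ᵀ` for every `x` with `x₃ > 0`. -/
theorem lambda_two_rectifies (κ ρ : ℝ) (hκ : 0 < κ)
    (Λ₂ Λ₂inv α₂ : ℝ × ℝ × ℝ → ℝ × ℝ × ℝ)
    (hΛ₂ : Λ₂ = fun y => (y.1, (2 / κ) * y.2.1, y.2.2 * Real.exp (-(ρ / κ) * y.2.1 ^ 2)))
    (hΛ₂inv : Λ₂inv = fun x => (x.1, (κ / 2) * x.2.1, x.2.2 * Real.exp ((ρ * κ / 4) * x.2.1 ^ 2)))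
    (hα₂ : α₂ = fun x => (0, κ / 2, ρ * x.2.1 * x.2.2)) :
    ∀ x : ℝ × ℝ × ℝ, 0 < x.2.2 →
      fderiv ℝ Λ₂ (Λ₂inv x) (α₂ (Λ₂inv x)) = (0, 1, 0) := by
  intro x _
  generalize Λ₂inv x = y
  have h1 : HasFDerivAt (fun y : ℝ × ℝ × ℝ => y.1) (ContinuousLinearMap.fst ℝ ℝ (ℝ × ℝ)) y :=
    hasFDerivAt_fst
  have hs : HasFDerivAt (fun y : ℝ × ℝ × ℝ => y.2) (ContinuousLinearMap.snd ℝ ℝ (ℝ × ℝ)) y :=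
    hasFDerivAt_snd
  have h2 := hs.fst
  have h3 := hs.snd
  have hE := ((h2.pow 2).const_mul (-(ρ / κ))).exp
  have h := h1.prodMk ((h2.const_mul (2 / κ)).prodMk (h3.mul hE))
  have hd := h.fderiv
  rw [hΛ₂, hα₂]
  refine (DFunLike.congr_fun hd _).trans ?_
  have hk : κ ≠ 0 := hκ.ne'
  ext
  · simp
  · simp
    exact hk
  · simp
    field_simp
    ring
end

section
/- The transformed Stratonovich drift of the extended Heston system is explicitly computable: for every x = (x₁,x₂,x₃) with x₃ > 0, (DΛ(Λ⁻¹(x)))·h(Λ⁻¹(x)) = (-(ϱ/2)x₁, -(ϱ/2)x₂, x₃·[μ - κρ/2 + (κρϱ/4 - κ²ρ²/8)(x₁² + x₂²)])ᵀ, where h(y₁,y₂,y₃) = (-(ϱ/2)y₁, -(ϱ/2)y₂, μy₃ - (κρ/2)y₃ - (ρ²/2)y₃(y₁²+y₂²))ᵀ, Λ(y₁,y₂,y₃) = ((2/κ)y₁, (2/κ)y₂, y₃·exp(-(ρ/κ)(y₁²+y₂²))) and Λ⁻¹(x₁,x₂,x₃) = ((κ/2)x₁, (κ/2)x₂, x₃·exp((ρκ/4)(x₁²+x₂²))).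 -/
/-- The transformed Stratonovich drift of the `n = 2` extended Heston system:
`(DΛ(Λ⁻¹(x)))·h(Λ⁻¹(x)) = (-(ϱ/2)x₁, -(ϱ/2)x₂,
x₃·[μ - κρ/2 + (κρϱ/4 - κ²ρ²/8)(x₁² + x₂²)])ᵀ` for `x₃ > 0`. -/
theorem transformed_drift (κ ρ ϱ μ : ℝ) (hκ : 0 < κ)
    (Λ Λinv h : ℝ × ℝ × ℝ → ℝ × ℝ × ℝ)
    (hΛ : Λ = fun y => ((2 / κ) * y.1, (2 / κ) * y.2.1,
      y.2.2 * Real.exp (-(ρ / κ) * (y.1 ^ 2 + y.2.1 ^ 2))))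
    (hΛinv : Λinv = fun x => ((κ / 2) * x.1, (κ / 2) * x.2.1,
      x.2.2 * Real.exp ((ρ * κ / 4) * (x.1 ^ 2 + x.2.1 ^ 2))))
    (hh : h = fun y => (-(ϱ / 2) * y.1, -(ϱ / 2) * y.2.1,
      μ * y.2.2 - (κ * ρ / 2) * y.2.2 - (ρ ^ 2 / 2) * y.2.2 * (y.1 ^ 2 + y.2.1 ^ 2))) :
    ∀ x : ℝ × ℝ × ℝ, 0 < x.2.2 →
      fderiv ℝ Λ (Λinv x) (h (Λinv x)) =
        (-(ϱ / 2) * x.1, -(ϱ / 2) * x.2.1,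
          x.2.2 * (μ - κ * ρ / 2 + (κ * ρ * ϱ / 4 - κ ^ 2 * ρ ^ 2 / 8) * (x.1 ^ 2 + x.2.1 ^ 2))) := by
  intro x _
  have hκ' : κ ≠ 0 := hκ.ne'
  have key : ∀ y v : ℝ × ℝ × ℝ, fderiv ℝ Λ y v = ((2 / κ) * v.1, (2 / κ) * v.2.1,
      Real.exp (-(ρ / κ) * (y.1 ^ 2 + y.2.1 ^ 2)) *
        (v.2.2 + y.2.2 * (-(ρ / κ) * (2 * y.1 * v.1 + 2 * y.2.1 * v.2.1)))) := by
    intro y v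
    have h1 : HasFDerivAt (fun y : ℝ × ℝ × ℝ => y.1)
        (ContinuousLinearMap.fst ℝ ℝ (ℝ × ℝ)) y := hasFDerivAt_fst
    have hs : HasFDerivAt (fun y : ℝ × ℝ × ℝ => y.2)
        (ContinuousLinearMap.snd ℝ ℝ (ℝ × ℝ)) y := hasFDerivAt_snd
    have h2 : HasFDerivAt (fun y : ℝ × ℝ × ℝ => y.2.1)
        ((ContinuousLinearMap.fst ℝ ℝ ℝ).comp (ContinuousLinearMap.snd ℝ ℝ (ℝ × ℝ))) y := hs.fst
    have h3 : HasFDerivAt (fun y : ℝ × ℝ × ℝ => y.2.2)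
        ((ContinuousLinearMap.snd ℝ ℝ ℝ).comp (ContinuousLinearMap.snd ℝ ℝ (ℝ × ℝ))) y := hs.snd
    rw [hΛ]
    have H := (h1.const_mul (2 / κ)).prodMk ((h2.const_mul (2 / κ)).prodMk
      (h3.mul ((((h1.pow 2).add (h2.pow 2)).const_mul (-(ρ / κ))).exp)))
    refine (congrArg (fun L => L v) H.fderiv).trans ?_
    simp
    ring
  rw [key, hh, hΛinv]
  obtain ⟨a, b, c⟩ := x
  have he : Real.exp (-(ρ / κ) * ((κ / 2 * a) ^ 2 + (κ / 2 * b) ^ 2))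
      = (Real.exp (ρ * κ / 4 * (a ^ 2 + b ^ 2)))⁻¹ := by
    rw [← Real.exp_neg]
    congr 1
    field_simp
    ring
  have hne := Real.exp_ne_zero (ρ * κ / 4 * (a ^ 2 + b ^ 2))
  simp only [he, Prod.mk.injEq]
  generalize Real.exp (ρ * κ / 4 * (a ^ 2 + b ^ 2)) = E at *
  refine ⟨?_, ?_, ?_⟩ <;> field_simp <;> ring
end
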